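/- Let P be a real symmetric positive definite m×m matrix, let Q be a real symmetric positive semidefinite k×k matrix and G a real symmetric positive semidefinite l×l matrix, and let B_τ be a real k×m matrix and B_c a real l×m matrix, each with trivial kernel (B_τ x = 0 ⟹ x = 0 and B_c x = 0 ⟹ x = 0). Then tr((B_τᵀ Q B_τ + B_cᵀ G B_c) P) ≤ (λ_max(Q) λ_max(B_τᵀ B_τ) + λ_max(G) λ_max(B_cᵀ B_c)) · tr(P), where λ_max(·) denotes the largest eigenvalue of a real symmetric matrix. -/

import Mathlib

open Matrix

/-!
In the Loewner order a Hermitian matrix `A` satisfies `A ≤ λ_max(A) • 1`. Congruence by `B`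
preserves this order, so `Bᴴ * Q * B ≤ λ_max(Q) • (Bᴴ * B) ≤ (λ_max(Q) * λ_max(Bᴴ * B)) • 1`, the
second inequality because `0 ≤ λ_max(Q)`. Adding two such bounds takes the place of Weyl's
inequality. Finally `A ≤ c • 1` gives `tr (A * P) ≤ c * tr P` for `P ≥ 0`, because the trace of a
product of two positive semidefinite matrices is nonnegative.
-/

section LoewnerOrder

open scoped ComplexOrder MatrixOrder

variable {𝕜 m k l : Type*} [RCLike 𝕜] [Fintype k]

theorem conjTranspose_mul_mul_le_conjTranspose_mul_mul [Finite m] {A B : Matrix k k 𝕜}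
    (hAB : A ≤ B) (C : Matrix k m 𝕜) : Cᴴ * A * C ≤ Cᴴ * B * C := by
  rw [Matrix.le_iff, ← Matrix.sub_mul, ← Matrix.mul_sub]
  exact (Matrix.le_iff.mp hAB).conjTranspose_mul_mul_same C

theorem conjTranspose_mul_mul_le_smul_one [Finite m] [DecidableEq m] [DecidableEq k]
    {A : Matrix k k 𝕜} {B : Matrix k m 𝕜} {a b : ℝ} (ha : 0 ≤ a)
    (hA : A ≤ a • (1 : Matrix k k 𝕜)) (hB : Bᴴ * B ≤ b • (1 : Matrix m m 𝕜)) :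
    Bᴴ * A * B ≤ (a * b) • (1 : Matrix m m 𝕜) :=
  calc
    Bᴴ * A * B ≤ Bᴴ * (a • (1 : Matrix k k 𝕜)) * B :=
      conjTranspose_mul_mul_le_conjTranspose_mul_mul hA B
    _ = a • (Bᴴ * B) := by rw [Matrix.mul_smul, Matrix.mul_one, Matrix.smul_mul]
    _ ≤ a • b • (1 : Matrix m m 𝕜) := by
      rw [Matrix.le_iff, ← smul_sub]
      exact (Matrix.le_iff.mp hB).smul ha
    _ = (a * b) • (1 : Matrix m m 𝕜) := smul_smul a b 1

variable [Fintype m]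

theorem le_iSup_eigenvalues_smul_one [DecidableEq m] {A : Matrix m m 𝕜} (hA : A.IsHermitian) :
    A ≤ (⨆ i, hA.eigenvalues i) • (1 : Matrix m m 𝕜) := by
  rw [← Algebra.algebraMap_eq_smul_one]
  refine le_algebraMap_of_spectrum_le (fun x hx ↦ ?_) hA
  obtain ⟨i, rfl⟩ := hA.spectrum_real_eq_range_eigenvalues ▸ hx
  exact le_ciSup (Set.finite_range hA.eigenvalues).bddAbove i

theorem conjTranspose_mul_mul_le_iSup_eigenvalues_smul_one [DecidableEq m] [DecidableEq k]
    {A : Matrix k k 𝕜} {B : Matrix k m 𝕜} (hA : A.IsHermitian)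
    (hA₀ : 0 ≤ ⨆ i, hA.eigenvalues i) (hB : (Bᴴ * B).IsHermitian) :
    Bᴴ * A * B ≤
      ((⨆ i, hA.eigenvalues i) * ⨆ i, hB.eigenvalues i) • (1 : Matrix m m 𝕜) :=
  conjTranspose_mul_mul_le_smul_one hA₀ (le_iSup_eigenvalues_smul_one hA)
    (le_iSup_eigenvalues_smul_one hB)

theorem trace_mul_nonneg_of_posSemidef {A P : Matrix m m 𝕜} (hA : A.PosSemidef)
    (hP : P.PosSemidef) : 0 ≤ (A * P).trace := by
  classical
  obtain ⟨C, rfl⟩ := CStarAlgebra.nonneg_iff_eq_star_mul_self.mp hP.nonneg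
  calc
    0 ≤ (C * A * Cᴴ).trace := (hA.mul_mul_conjTranspose_same C).trace_nonneg
    _ = (A * (Cᴴ * C)).trace := by rw [Matrix.mul_assoc, trace_mul_comm, Matrix.mul_assoc]

theorem trace_mul_le_smul_trace [DecidableEq m] {A P : Matrix m m 𝕜} {c : ℝ}
    (hA : A ≤ c • (1 : Matrix m m 𝕜)) (hP : P.PosSemidef) : (A * P).trace ≤ c • P.trace := by
  have hnonneg : 0 ≤ ((c • (1 : Matrix m m 𝕜) - A) * P).trace :=
    trace_mul_nonneg_of_posSemidef (Matrix.le_iff.mp hA) hP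
  rwa [Matrix.sub_mul, Matrix.smul_mul, Matrix.one_mul, trace_sub, trace_smul, sub_nonneg]
    at hnonneg

theorem fullbound_upper_general [Fintype l] [DecidableEq m] [DecidableEq k] [DecidableEq l]
    {P : Matrix m m 𝕜} {Q : Matrix k k 𝕜} {G : Matrix l l 𝕜} {Bτ : Matrix k m 𝕜}
    {Bc : Matrix l m 𝕜} (hP : P.PosSemidef) (hQ : Q.IsHermitian) (hG : G.IsHermitian)
    (hQ₀ : 0 ≤ ⨆ i, hQ.eigenvalues i) (hG₀ : 0 ≤ ⨆ i, hG.eigenvalues i)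
    (hBτBτ : (Bτᴴ * Bτ).IsHermitian) (hBcBc : (Bcᴴ * Bc).IsHermitian) :
    ((Bτᴴ * Q * Bτ + Bcᴴ * G * Bc) * P).trace ≤
      ((⨆ i, hQ.eigenvalues i) * (⨆ i, hBτBτ.eigenvalues i) +
        (⨆ i, hG.eigenvalues i) * (⨆ i, hBcBc.eigenvalues i)) • P.trace := by
  refine trace_mul_le_smul_trace ?_ hP
  rw [add_smul]
  exact add_le_add (conjTranspose_mul_mul_le_iSup_eigenvalues_smul_one hQ hQ₀ hBτBτ)
    (conjTranspose_mul_mul_le_iSup_eigenvalues_smul_one hG hG₀ hBcBc)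

end LoewnerOrder

/-- The upper bound of Lemma 3 (fullbound):
`tr((B_τᵀ Q B_τ + B_cᵀ G B_c) P) ≤ (λ_max(Q) λ_max(B_τᵀ B_τ) + λ_max(G) λ_max(B_cᵀ B_c)) tr P`. -/
theorem fullbound_upper {m k l : ℕ} (P : Matrix (Fin m) (Fin m) ℝ)
    (Q : Matrix (Fin k) (Fin k) ℝ) (G : Matrix (Fin l) (Fin l) ℝ)
    (Bτ : Matrix (Fin k) (Fin m) ℝ) (Bc : Matrix (Fin l) (Fin m) ℝ)
    (hP : P.PosDef) (hQ : Q.PosSemidef) (hG : G.PosSemidef)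
    (hBτ : ∀ x : Fin m → ℝ, Bτ.mulVec x = 0 → x = 0)
    (hBc : ∀ x : Fin m → ℝ, Bc.mulVec x = 0 → x = 0)
    (hBτBτ : (Bτᵀ * Bτ).IsHermitian) (hBcBc : (Bcᵀ * Bc).IsHermitian) :
    ((Bτᵀ * Q * Bτ + Bcᵀ * G * Bc) * P).trace ≤
      ((⨆ i, hQ.isHermitian.eigenvalues i) * (⨆ i, hBτBτ.eigenvalues i) +
        (⨆ i, hG.isHermitian.eigenvalues i) * (⨆ i, hBcBc.eigenvalues i)) * P.trace := by
  -- Over `ℝ`, `Bᴴ` unfolds to `Bᵀ` and `•` to `*`.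
  exact fullbound_upper_general hP.posSemidef hQ.isHermitian hG.isHermitian
    (Real.iSup_nonneg hQ.eigenvalues_nonneg) (Real.iSup_nonneg hG.eigenvalues_nonneg) hBτBτ hBcBc
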